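/- For every real number q with 0 < q < 1 one has q^(1/16) / ∏_{k=0}^∞ (1 − q^(k+1/2)) = (∑_{n∈ℤ} q^((n+1/4)²)) / ∏_{n=1}^∞ (1 − q^n). -/

import Mathlib

open scoped BigOperators

/-!
Put `x = √q`. Completing the square turns the exponents `(n + 1/4)²` of `q` into exponents
`n (2 n + 1)` of `x`, so the claim is Gauss's identity
`∑_{n ∈ ℤ} x ^ (n (2 n + 1)) = ∏_{k ≥ 0} (1 - x ^ (2 k + 2)) / (1 - x ^ (2 k + 1))`.
Following Shanks, let `P N` be the `N`-th partial product and
`F N s = P N / P s * x ^ (s (2 N + 1))`. The difference `F (N + 1) s - F N s` telescopes in `s`,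
whence by induction `∑_{s ≤ N} F N s` is exactly the partial sum over `|n| ≤ N` of the left-hand
side. As `N → ∞` only the term `F N 0 = P N` survives.
-/

open Filter Finset Topology

/-- The generalized hexagonal number `n (2 n + 1)`, which is nonnegative for every integer `n`;
it is the exponent in Gauss's identity. As `n` runs over `ℤ` these are the triangular numbers. -/
def hexagonal (n : ℤ) : ℕ := (n * (2 * n + 1)).toNat

theorem natCast_hexagonal (n : ℤ) : (hexagonal n : ℤ) = n * (2 * n + 1) := by
  refine Int.toNat_of_nonneg ?_
  rcases le_or_gt 0 n with hn | hn
  · positivity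
  · exact mul_nonneg_of_nonpos_of_nonpos hn.le (by lia)

theorem hexagonal_natCast (n : ℕ) : hexagonal n = n * (2 * n + 1) := by
  zify [natCast_hexagonal]

theorem hexagonal_neg_natCast_add_one (n : ℕ) :
    hexagonal (-(n + 1)) = (n + 1) * (2 * n + 1) := by
  zify [natCast_hexagonal]
  ring

theorem hexagonal_injective : Function.Injective hexagonal := by
  intro m n h
  have hmul : (m - n) * (2 * (m + n) + 1) = 0 := by
    zify [natCast_hexagonal] at h
    linear_combination h
  rcases mul_eq_zero.mp hmul with h | h <;> lia

section Field

variable {K : Type*} [Field K] {x : K}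

/-- The partial products `∏_{i < n} (1 - x ^ (2 i + 2)) / (1 - x ^ (2 i + 1))` of the product side
of Gauss's identity. -/
def evenOddProd (x : K) (n : ℕ) : K :=
  ∏ i ∈ range n, (1 - x ^ (2 * i + 2)) / (1 - x ^ (2 * i + 1))

/-- The summand of Shanks's finite form of Gauss's identity. -/
def shanksTerm (x : K) (N s : ℕ) : K :=
  evenOddProd x N / evenOddProd x s * (x ^ (2 * N + 1)) ^ s

/-- The companion of `shanksTerm` in the sense of Wilf and Zeilberger: its differences in `s` are
the differences of `shanksTerm` in `N`. -/
def shanksCompanion (x : K) (N s : ℕ) : K :=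
  shanksTerm x N s * ((1 - x ^ (2 * s)) / (1 - x ^ (2 * N + 1)))

theorem evenOddProd_zero (x : K) : evenOddProd x 0 = 1 := prod_range_zero _

theorem evenOddProd_succ (x : K) (n : ℕ) :
    evenOddProd x (n + 1) =
      evenOddProd x n * ((1 - x ^ (2 * n + 2)) / (1 - x ^ (2 * n + 1))) :=
  prod_range_succ _ n

theorem one_sub_pow_ne_zero_of_not_isOfFinOrder (hx : ¬IsOfFinOrder x) {n : ℕ} (hn : n ≠ 0) :
    1 - x ^ n ≠ 0 := fun h ↦
  hx (isOfFinOrder_iff_pow_eq_one.mpr ⟨n, Nat.pos_of_ne_zero hn, (sub_eq_zero.mp h).symm⟩)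

theorem evenOddProd_ne_zero (hx : ¬IsOfFinOrder x) (n : ℕ) : evenOddProd x n ≠ 0 :=
  prod_ne_zero_iff.mpr fun _ _ ↦ div_ne_zero
    (one_sub_pow_ne_zero_of_not_isOfFinOrder hx (by lia))
    (one_sub_pow_ne_zero_of_not_isOfFinOrder hx (by lia))

theorem shanksTerm_self (hx : ¬IsOfFinOrder x) (N : ℕ) :
    shanksTerm x N N = x ^ hexagonal N := by
  rw [shanksTerm, div_self (evenOddProd_ne_zero hx N), one_mul, ← pow_mul', hexagonal_natCast]

theorem shanksTerm_succ_left (x : K) (N s : ℕ) :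
    shanksTerm x (N + 1) s =
      shanksTerm x N s * (x ^ (2 * s) * ((1 - x ^ (2 * N + 2)) / (1 - x ^ (2 * N + 1)))) := by
  rw [shanksTerm, shanksTerm, evenOddProd_succ]
  ring

theorem shanksTerm_succ_right (x : K) (N s : ℕ) :
    shanksTerm x N (s + 1) =
      shanksTerm x N s * (x ^ (2 * N + 1) * ((1 - x ^ (2 * s + 1)) / (1 - x ^ (2 * s + 2)))) := by
  rw [shanksTerm, shanksTerm, evenOddProd_succ, pow_succ, div_mul_eq_div_div,
    div_eq_mul_inv _ (_ / _), inv_div]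
  ring

theorem shanksTerm_succ_sub (hx : ¬IsOfFinOrder x) (N s : ℕ) :
    shanksTerm x (N + 1) s - shanksTerm x N s =
      shanksCompanion x N (s + 1) - shanksCompanion x N s := by
  have hN : 1 - x ^ (2 * N + 1) ≠ 0 := one_sub_pow_ne_zero_of_not_isOfFinOrder hx (by lia)
  have hs : 1 - x ^ (2 * s + 2) ≠ 0 := one_sub_pow_ne_zero_of_not_isOfFinOrder hx (by lia)
  rw [shanksCompanion, shanksCompanion, shanksTerm_succ_left, shanksTerm_succ_right,
    mul_add_one 2 s]
  field_simp
  ring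

theorem shanksCompanion_zero_right (x : K) (N : ℕ) : shanksCompanion x N 0 = 0 := by
  simp [shanksCompanion]

theorem shanksCompanion_succ_self (hx : ¬IsOfFinOrder x) (N : ℕ) :
    shanksCompanion x N (N + 1) = x ^ hexagonal (-(N + 1)) := by
  have hodd : 1 - x ^ (2 * N + 1) ≠ 0 := one_sub_pow_ne_zero_of_not_isOfFinOrder hx (by lia)
  have heven : 1 - x ^ (2 * N + 2) ≠ 0 := one_sub_pow_ne_zero_of_not_isOfFinOrder hx (by lia)
  calc shanksCompanion x N (N + 1)
    _ = x ^ hexagonal N * x ^ (2 * N + 1) := by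
      rw [shanksCompanion, shanksTerm_succ_right, shanksTerm_self hx, mul_add_one 2 N]
      field_simp
    _ = x ^ hexagonal (-(N + 1)) := by
      rw [← pow_add, hexagonal_natCast, hexagonal_neg_natCast_add_one]
      ring

theorem sum_shanksTerm_succ_left (hx : ¬IsOfFinOrder x) (N m : ℕ) :
    ∑ s ∈ range m, shanksTerm x (N + 1) s =
      ∑ s ∈ range m, shanksTerm x N s + shanksCompanion x N m := by
  rw [← sub_eq_iff_eq_add', ← sum_sub_distrib]
  simp_rw [shanksTerm_succ_sub hx]
  rw [sum_range_sub, shanksCompanion_zero_right, sub_zero]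

theorem sum_shanksTerm (hx : ¬IsOfFinOrder x) (N : ℕ) :
    ∑ s ∈ range (N + 1), shanksTerm x N s = ∑ n ∈ Icc (-N : ℤ) N, x ^ hexagonal n := by
  induction N with
  | zero => simp [shanksTerm_self hx 0]
  | succ N ih =>
    rw [sum_range_succ, sum_shanksTerm_succ_left hx, ih, shanksCompanion_succ_self hx,
      shanksTerm_self hx, Nat.cast_succ, sum_Icc_succ_eq_add_endpoints]
    ring

end Field

section NormedField

variable {K : Type*} [NormedField K] {x : K}

theorem tendsto_sum_range_mul_pow {u y : ℕ → K} (hu : Bornology.IsBounded (Set.range u))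
    (hy : Tendsto y atTop (𝓝 0)) :
    Tendsto (fun N ↦ ∑ s ∈ range (N + 1), u s * y N ^ s) atTop (𝓝 (u 0)) := by
  obtain ⟨C, hC⟩ := hu.exists_norm_le
  replace hC (s : ℕ) : ‖u s‖ ≤ C := hC _ ⟨s, rfl⟩
  have hbound : ∀ᶠ N in atTop,
      ‖∑ s ∈ range N, u (s + 1) * y N ^ (s + 1)‖ ≤ C * ‖y N‖ * (1 - ‖y N‖)⁻¹ := by
    filter_upwards [hy.norm.eventually_lt_const (by simp : ‖(0 : K)‖ < 1)] with N hN
    calc ‖∑ s ∈ range N, u (s + 1) * y N ^ (s + 1)‖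
      _ ≤ ∑ s ∈ range N, C * ‖y N‖ ^ (s + 1) := by
        refine norm_sum_le_of_le _ fun s _ ↦ ?_
        rw [norm_mul, norm_pow]
        gcongr
        exact hC _
      _ = C * ‖y N‖ * ∑ s ∈ range N, ‖y N‖ ^ s := by
        rw [mul_sum]
        exact sum_congr rfl fun s _ ↦ by ring
      _ ≤ C * ‖y N‖ * (1 - ‖y N‖)⁻¹ := by
        have hC_nonneg : 0 ≤ C := (norm_nonneg _).trans (hC 0)
        rw [← tsum_geometric_of_lt_one (norm_nonneg _) hN]
        gcongr
        exact (summable_geometric_of_lt_one (norm_nonneg _) hN).sum_le_tsum _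
          fun _ _ ↦ by positivity
  have hbound_tendsto : Tendsto (fun N ↦ C * ‖y N‖ * (1 - ‖y N‖)⁻¹) atTop (𝓝 0) := by
    have hsub := (hy.norm.const_sub 1).inv₀ (by simp)
    simpa using (hy.norm.const_mul C).mul hsub
  have htail := squeeze_zero_norm' hbound hbound_tendsto
  simpa [sum_range_succ'] using htail.add_const (u 0)

theorem not_isOfFinOrder_of_norm_lt_one (hx : ‖x‖ < 1) : ¬IsOfFinOrder x :=
  fun h ↦ hx.ne h.norm_eq_one

theorem summable_norm_pow_comp {ι : Type*} (hx : ‖x‖ < 1) {f : ι → ℕ}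
    (hf : Function.Injective f) : Summable fun i ↦ ‖x ^ f i‖ :=
  (summable_norm_geometric_of_norm_lt_one hx).comp_injective hf

variable [CompleteSpace K]

theorem multipliable_one_sub_pow_comp {ι : Type*} (hx : ‖x‖ < 1) {f : ι → ℕ}
    (hf : Function.Injective f) : Multipliable fun i ↦ 1 - x ^ f i := by
  simp_rw [sub_eq_add_neg]
  exact multipliable_one_add_of_summable (by simpa using summable_norm_pow_comp hx hf)

theorem tprod_one_sub_pow_comp_ne_zero {ι : Type*} (hx : ‖x‖ < 1) {f : ι → ℕ}
    (hf : Function.Injective f) (hf₀ : ∀ i, f i ≠ 0) : ∏' i, (1 - x ^ f i) ≠ 0 := by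
  simp_rw [sub_eq_add_neg]
  refine tprod_one_add_ne_zero_of_summable (fun i ↦ ?_)
    (by simpa using summable_norm_pow_comp hx hf)
  rw [← sub_eq_add_neg]
  exact one_sub_pow_ne_zero_of_not_isOfFinOrder (not_isOfFinOrder_of_norm_lt_one hx) (hf₀ i)

theorem tprod_one_sub_pow_odd_ne_zero (hx : ‖x‖ < 1) : ∏' k : ℕ, (1 - x ^ (2 * k + 1)) ≠ 0 :=
  tprod_one_sub_pow_comp_ne_zero hx (fun _ _ _ ↦ by lia) fun _ ↦ by lia

theorem tprod_one_sub_pow_even_ne_zero (hx : ‖x‖ < 1) : ∏' k : ℕ, (1 - x ^ (2 * k + 2)) ≠ 0 :=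
  tprod_one_sub_pow_comp_ne_zero hx (fun _ _ _ ↦ by lia) fun _ ↦ by lia

theorem tendsto_evenOddProd (hx : ‖x‖ < 1) :
    Tendsto (evenOddProd x) atTop
      (𝓝 ((∏' k : ℕ, (1 - x ^ (2 * k + 2))) / ∏' k : ℕ, (1 - x ^ (2 * k + 1)))) := by
  have heven := multipliable_one_sub_pow_comp hx (f := fun k : ℕ ↦ 2 * k + 2) fun _ _ _ ↦ by lia
  have hodd := multipliable_one_sub_pow_comp hx (f := fun k : ℕ ↦ 2 * k + 1) fun _ _ _ ↦ by lia
  refine (heven.hasProd.tendsto_prod_nat.div hodd.hasProd.tendsto_prod_nat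
    (tprod_one_sub_pow_odd_ne_zero hx)).congr fun n ↦ ?_
  exact (prod_div_distrib ..).symm

theorem tendsto_sum_shanksTerm (hx : ‖x‖ < 1) :
    Tendsto (fun N ↦ ∑ s ∈ range (N + 1), shanksTerm x N s) atTop
      (𝓝 ((∏' k : ℕ, (1 - x ^ (2 * k + 2))) / ∏' k : ℕ, (1 - x ^ (2 * k + 1)))) := by
  have hprod := tendsto_evenOddProd hx
  have hinv_bounded : Bornology.IsBounded (Set.range fun s ↦ (evenOddProd x s)⁻¹) :=
    Metric.isBounded_range_of_tendsto _ <| hprod.inv₀ <|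
      div_ne_zero (tprod_one_sub_pow_even_ne_zero hx) (tprod_one_sub_pow_odd_ne_zero hx)
  have hpow : Tendsto (fun N : ℕ ↦ x ^ (2 * N + 1)) atTop (𝓝 0) :=
    (tendsto_pow_atTop_nhds_zero_of_norm_lt_one hx).comp
      (StrictMono.tendsto_atTop fun _ _ _ ↦ by lia)
  have hsum := hprod.mul (tendsto_sum_range_mul_pow hinv_bounded hpow)
  rw [evenOddProd_zero, inv_one, mul_one] at hsum
  refine hsum.congr fun N ↦ ?_
  simp only [shanksTerm, mul_sum, div_eq_mul_inv, mul_assoc]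

theorem hasSum_pow_hexagonal (hx : ‖x‖ < 1) :
    HasSum (fun n ↦ x ^ hexagonal n)
      ((∏' k : ℕ, (1 - x ^ (2 * k + 2))) / ∏' k : ℕ, (1 - x ^ (2 * k + 1))) := by
  have hsummable : Summable fun n ↦ x ^ hexagonal n :=
    (summable_norm_pow_comp hx hexagonal_injective).of_norm
  have hpartial : Tendsto (fun N : ℕ ↦ ∑ n ∈ Icc (-N : ℤ) N, x ^ hexagonal n) atTop
      (𝓝 ((∏' k : ℕ, (1 - x ^ (2 * k + 2))) / ∏' k : ℕ, (1 - x ^ (2 * k + 1)))) :=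
    (tendsto_sum_shanksTerm hx).congr (sum_shanksTerm (not_isOfFinOrder_of_norm_lt_one hx))
  rw [← tendsto_nhds_unique (hsummable.hasSum.comp tendsto_Icc_neg) hpartial]
  exact hsummable.hasSum

end NormedField

section Real

variable {q : ℝ}

theorem rpow_natCast_div_two (hq : 0 ≤ q) (n : ℕ) : q ^ ((n : ℝ) / 2) = √q ^ n := by
  rw [Real.sqrt_eq_rpow, ← Real.rpow_mul_natCast hq]
  ring_nf

theorem rpow_intCast_add_quarter_sq (hq : 0 < q) (n : ℤ) :
    q ^ (((n : ℝ) + 1 / 4) ^ 2) = q ^ ((1 : ℝ) / 16) * √q ^ hexagonal n := by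
  have hcast : (hexagonal n : ℝ) = n * (2 * n + 1) := mod_cast natCast_hexagonal n
  rw [← rpow_natCast_div_two hq.le, ← Real.rpow_add hq, hcast]
  ring_nf

end Real

/-- Gauss identity: `q^(1/16) / ∏_{k=0}^∞ (1 − q^(k+1/2))
    = (∑_{n∈ℤ} q^((n+1/4)²)) / ∏_{n=1}^∞ (1 − q^n)` for `0 < q < 1`. -/
theorem stmt0 (q : ℝ) (hq0 : 0 < q) (hq1 : q < 1) :
    q ^ ((1 : ℝ) / 16) / ∏' k : ℕ, (1 - q ^ ((k : ℝ) + 1 / 2)) =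
      (∑' n : ℤ, q ^ (((n : ℝ) + 1 / 4) ^ 2)) / ∏' n : ℕ, (1 - q ^ (n + 1)) := by
  have hsqrt : ‖√q‖ < 1 := by
    rwa [Real.norm_of_nonneg (Real.sqrt_nonneg q), Real.sqrt_lt' one_pos, one_pow]
  have hodd (k : ℕ) : q ^ ((k : ℝ) + 1 / 2) = √q ^ (2 * k + 1) := by
    rw [← rpow_natCast_div_two hq0.le]
    push_cast
    ring_nf
  have heven (k : ℕ) : q ^ (k + 1) = √q ^ (2 * k + 2) := by
    rw [← mul_add_one 2 k, pow_mul, Real.sq_sqrt hq0.le]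
  simp_rw [hodd, heven, rpow_intCast_add_quarter_sq hq0]
  rw [tsum_mul_left, (hasSum_pow_hexagonal hsqrt).tsum_eq]
  have heven_ne_zero := tprod_one_sub_pow_even_ne_zero hsqrt
  field_simp
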